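/- arXiv:1712.10327 — 4 statements merged into one kernel-verified Lean document; each statement's English description precedes it below -/
import Mathlib

section
/- Let P be a real polynomial of degree n ≥ 1 all of whose coefficients are non-negative. If P is real-rooted (so all its roots are real, hence non-positive), then the inequality n·P(x)·P''(x) + (1-n)·P'(x)² ≤ 0 holds for every x ∈ ℝ. -/
open Polynomial in
/-- The Laguerre inequality for a monic product of real linear factors. -/
theorem laguerre_inequality_prod_X_sub_C (s : Multiset ℝ) (x : ℝ) :
    (Multiset.card s : ℝ) * (s.map fun a => X - C a).prod.eval x
        * (derivative (derivative (s.map fun a => X - C a).prod)).eval x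
      + (1 - (Multiset.card s : ℝ)) * ((derivative (s.map fun a => X - C a).prod).eval x) ^ 2
      ≤ 0 := by
  induction s using Multiset.induction_on with
  | empty => simp
  | cons a s ih =>
    rcases s.empty_or_exists_mem with rfl | ⟨b, hb⟩
    · simp
    have hpos : (0 : ℝ) < Multiset.card s := by
      exact_mod_cast Multiset.card_pos_iff_exists_mem.2 ⟨b, hb⟩
    simp only [Multiset.map_cons, Multiset.prod_cons, Multiset.card_cons, derivative_mul,
      derivative_add, derivative_sub, derivative_X, derivative_C, eval_add, eval_mul, eval_sub,
      eval_X, eval_C, sub_zero, one_mul, Nat.cast_add, Nat.cast_one]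
    generalize (s.map fun a => X - C a).prod = Q at ih ⊢
    generalize (derivative (derivative Q)).eval x = r at ih ⊢
    generalize (derivative Q).eval x = q at ih ⊢
    generalize Q.eval x = p at ih ⊢
    generalize (Multiset.card s : ℝ) = m at ih hpos ⊢
    refine nonpos_of_mul_nonpos_right (a := m) ?_ hpos
    have hscaled := mul_nonpos_of_nonneg_of_nonpos
      (mul_nonneg (add_nonneg hpos.le zero_le_one) (sq_nonneg (x - a))) ih
    nlinarith [sq_nonneg ((x - a) * q - m * p)]

theorem stmt2 (P : Polynomial ℝ) (n : ℕ) (hn : 1 ≤ n) (hdeg : P.natDegree = n)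
    (hcoeff : ∀ k, 0 ≤ P.coeff k)
    (hroots : (P.map (RingHom.id ℝ)).Splits) :
    ∀ x : ℝ, (n : ℝ) * P.eval x * (Polynomial.derivative (Polynomial.derivative P)).eval x
      + (1 - (n : ℝ)) * ((Polynomial.derivative P).eval x) ^ 2 ≤ 0 := by
  intro x
  rw [Polynomial.map_id] at hroots
  have hmonic := laguerre_inequality_prod_X_sub_C P.roots x
  rw [← hroots.natDegree_eq_card_roots, hdeg] at hmonic
  have hscaled := mul_nonpos_of_nonneg_of_nonpos (sq_nonneg P.leadingCoeff) hmonic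
  rw [hroots.eq_prod_roots]
  simp only [Polynomial.derivative_C_mul, Polynomial.eval_C_mul]
  linarith
end

section
/- Let P = a₀ + a₁X + a₂X² + a₃X³ be a real polynomial with a₀, a₁, a₂, a₃ ≥ 0 and a₃ ≠ 0. Then P is real-rooted if and only if 3·P(x)·P''(x) - 2·P'(x)² ≤ 0 for all x ∈ ℝ. -/
open Polynomial in
/-- Three times a cubic times its second derivative, minus twice the square of its derivative, is
`-2` times the Hessian form of the cubic. -/
theorem three_mul_eval_mul_sub_eq_hessian (a b c d x : ℝ) :
    3 * (C d + C c * X + C b * X ^ 2 + C a * X ^ 3 : ℝ[X]).eval x *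
          (derivative (derivative (C d + C c * X + C b * X ^ 2 + C a * X ^ 3))).eval x
        - 2 * ((derivative (C d + C c * X + C b * X ^ 2 + C a * X ^ 3)).eval x) ^ 2 =
      -2 * ((b ^ 2 - 3 * a * c) * (x * x) + (b * c - 9 * a * d) * x + (c ^ 2 - 3 * b * d)) := by
  simp
  ring

/-- A cubic with nonnegative coefficients and positive leading coefficient has a real root. -/
theorem exists_root_of_cubic_nonneg {a b c d : ℝ} (ha : 0 < a) (hb : 0 ≤ b) (hc : 0 ≤ c)
    (hd : 0 ≤ d) : ∃ r : ℝ, d + c * r + b * r ^ 2 + a * r ^ 3 = 0 := by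
  have hM : 0 ≤ (b + c + d) / a := by positivity
  set M := 1 + (b + c + d) / a with hMdef
  have haM : a * M = a + b + c + d := by rw [hMdef]; field_simp; ring
  have hneg : d + c * (-M) + b * (-M) ^ 2 + a * (-M) ^ 3 ≤ 0 := by
    have hM1 : 1 ≤ M := by linarith
    have hcube : a * (-M) ^ 3 = -((a + b + c + d) * M ^ 2) := by rw [← haM]; ring
    rw [hcube]
    nlinarith [mul_nonneg hd (by nlinarith : 0 ≤ M ^ 2 - 1), mul_nonneg hc (sq_nonneg M),
      mul_nonneg ha.le (sq_nonneg M), mul_nonneg hc (by linarith : 0 ≤ M)]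
  have hcont : ContinuousOn (fun r : ℝ => d + c * r + b * r ^ 2 + a * r ^ 3)
      (Set.Icc (-M) 0) := by fun_prop
  obtain ⟨r, -, hr⟩ := intermediate_value_Icc (by linarith : -M ≤ 0) hcont
    ⟨hneg, by simpa using hd⟩
  exact ⟨r, hr⟩

/-- A real quadratic whose product with `X - r` has a nonnegative discriminant has itself a
nonnegative discriminant. -/
theorem quadratic_discrim_nonneg_of_cubic {a p q r : ℝ}
    (h : 0 ≤ (p ^ 2 - 4 * a * q) * (a * r ^ 2 + p * r + q) ^ 2) : 0 ≤ p ^ 2 - 4 * a * q := by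
  by_cases hr : a * r ^ 2 + p * r + q = 0
  · have : p ^ 2 - 4 * a * q = (2 * a * r + p) ^ 2 := by linear_combination -4 * a * hr
    rw [this]
    positivity
  · exact nonneg_of_mul_nonneg_left h (by positivity)

open Polynomial in
theorem stmt6 (a₀ a₁ a₂ a₃ : ℝ) (h₀ : 0 ≤ a₀) (h₁ : 0 ≤ a₁) (h₂ : 0 ≤ a₂) (h₃ : 0 ≤ a₃)
    (ha₃ : a₃ ≠ 0)
    (P : Polynomial ℝ) (hP : P = C a₀ + C a₁ * X + C a₂ * X ^ 2 + C a₃ * X ^ 3) :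
    (P.map (RingHom.id ℝ)).Splits ↔
      ∀ x : ℝ, 3 * P.eval x * (derivative (derivative P)).eval x
        - 2 * ((derivative P).eval x) ^ 2 ≤ 0 := by
  have hcubic : P = (Cubic.mk a₃ a₂ a₁ a₀).toPoly := by
    rw [hP, Cubic.toPoly]
    ring
  constructor
  · intro hs x
    rw [hcubic] at hs
    obtain ⟨r, s, t, hroots⟩ :=
      (Cubic.splits_iff_roots_eq_three (P := Cubic.mk a₃ a₂ a₁ a₀) ha₃).1 hs
    have hb := Cubic.b_eq_three_roots (P := Cubic.mk a₃ a₂ a₁ a₀) ha₃ hroots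
    have hc := Cubic.c_eq_three_roots (P := Cubic.mk a₃ a₂ a₁ a₀) ha₃ hroots
    have hd := Cubic.d_eq_three_roots (P := Cubic.mk a₃ a₂ a₁ a₀) ha₃ hroots
    simp only [RingHom.id_apply] at hb hc hd
    rw [hP, three_mul_eval_mul_sub_eq_hessian, hb, hc, hd]
    have hsq : 0 ≤ a₃ ^ 2 * (((r - s) * (x - t)) ^ 2 + ((s - t) * (x - r)) ^ 2 +
      ((t - r) * (x - s)) ^ 2) := by positivity
    linarith
  · intro h
    obtain ⟨r, hr⟩ := exists_root_of_cubic_nonneg (lt_of_le_of_ne h₃ ha₃.symm) h₂ h₁ h₀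
    set p := a₂ + a₃ * r with hp
    set q := a₁ + p * r with hq
    have ha₂ : a₂ = p - a₃ * r := by rw [hp]; ring
    have ha₁ : a₁ = q - p * r := by rw [hq]; ring
    have ha₀ : a₀ = -(q * r) := by rw [hq, hp]; linear_combination hr
    have hdiscrim := discrim_le_zero (a := a₂ ^ 2 - 3 * a₃ * a₁) (b := a₂ * a₁ - 9 * a₃ * a₀)
      (c := a₁ ^ 2 - 3 * a₂ * a₀) fun x => by
        have hx := h x
        rw [hP, three_mul_eval_mul_sub_eq_hessian] at hx
        linarith
    have hquad : 0 ≤ p ^ 2 - 4 * a₃ * q := by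
      apply quadratic_discrim_nonneg_of_cubic (r := r)
      clear_value p q
      subst ha₂ ha₁ ha₀
      rw [discrim] at hdiscrim
      linarith
    obtain ⟨s, hs⟩ := exists_quadratic_eq_zero (a := a₃) (b := p) (c := q) ha₃
      ⟨√(p ^ 2 - 4 * a₃ * q), by rw [Real.mul_self_sqrt hquad, discrim]⟩
    have hfactor : P = C a₃ * (X - C r) * (X - C s) * (X - C (-p / a₃ - s)) := by
      have hpt : p = -a₃ * (s + (-p / a₃ - s)) := by field_simp; ring
      set t := -p / a₃ - s
      have hqt : q = a₃ * s * t := by linear_combination hs - s * hpt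
      clear_value p q t
      rw [hP, ha₀, ha₁, ha₂, hqt, hpt]
      simp only [C_add, C_sub, C_mul, C_neg]
      ring
    rw [Polynomial.map_id, hfactor]
    exact (((Splits.C _).mul (Splits.X_sub_C _)).mul (Splits.X_sub_C _)).mul (Splits.X_sub_C _)
end

section
/- Let n ≥ 2 and let a₀, a₁, a₂ ≥ 0. Set f(x) = a₀ + a₁σ₁(x) + a₂σ₂(x) for x ∈ (0, ∞)ⁿ, where σ₁, σ₂ are the first and second elementary symmetric polynomials in n variables. Then √f is concave on (0, ∞)ⁿ if and only if n·a₁² - 2(n-1)·a₀a₂ ≥ 0, equivalently if and only if the polynomial a₀·C(n,0) + a₁·C(n,1)·X + a₂·C(n,2)·X² is real-rooted. -/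
/-- The `k`-th elementary symmetric polynomial in `n` real variables. -/
noncomputable def esymm (n k : ℕ) (x : Fin n → ℝ) : ℝ :=
  ∑ s ∈ Finset.powersetCard k (Finset.univ : Finset (Fin n)), ∏ i ∈ s, x i

open Finset in
/-- The second elementary symmetric polynomial of a finite family, through power sums. -/
theorem two_mul_sum_powersetCard_two {ι : Type*} (s : Finset ι) (x : ι → ℝ) :
    2 * ∑ t ∈ powersetCard 2 s, ∏ i ∈ t, x i = (∑ i ∈ s, x i) ^ 2 - ∑ i ∈ s, x i ^ 2 := by
  classical
  induction s using Finset.induction_on with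
  | empty => rw [powersetCard_eq_empty.mpr (by simp)]; simp
  | insert a s ha ih =>
    have hdisj : Disjoint (powersetCard 2 s) ((powersetCard 1 s).image (insert a)) := by
      rw [Finset.disjoint_left]
      intro t ht ht'
      obtain ⟨r, -, rfl⟩ := mem_image.mp ht'
      exact ha ((mem_powersetCard.mp ht).1 (mem_insert_self a r))
    have hinj : Set.InjOn (insert a) (powersetCard 1 s : Set (Finset ι)) := by
      intro t ht r hr h
      have hat : a ∉ t := fun h' => ha ((mem_powersetCard.mp ht).1 h')
      have har : a ∉ r := fun h' => ha ((mem_powersetCard.mp hr).1 h')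
      rw [← erase_insert hat, ← erase_insert har, h]
    have himage : ∑ t ∈ (powersetCard 1 s).image (insert a), ∏ i ∈ t, x i
        = x a * ∑ i ∈ s, x i := by
      rw [sum_image hinj, powersetCard_one, sum_map, mul_sum]
      refine sum_congr rfl fun i hi => ?_
      have hai : a ≠ i := fun h => ha (h ▸ hi)
      simp [prod_pair hai]
    rw [powersetCard_succ_insert ha, sum_union hdisj, himage, sum_insert ha, sum_insert ha]
    linear_combination ih

theorem esymm_one (n : ℕ) (x : Fin n → ℝ) : esymm n 1 x = ∑ i, x i := by
  simp [esymm, Finset.powersetCard_one]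

theorem esymm_two (n : ℕ) (x : Fin n → ℝ) :
    esymm n 2 x = ((∑ i, x i) ^ 2 - ∑ i, x i ^ 2) / 2 := by
  have h := two_mul_sum_powersetCard_two Finset.univ x
  unfold esymm
  linarith

theorem esymm_nonneg {n : ℕ} (k : ℕ) {x : Fin n → ℝ} (hx : ∀ i, 0 ≤ x i) : 0 ≤ esymm n k x :=
  Finset.sum_nonneg fun _ _ => Finset.prod_nonneg fun i _ => hx i

/-- The reverse Cauchy-Schwarz inequality for a Lorentzian form, in terms of the time components
`A`, `A'` and the Gram entries `P`, `R`, `S` of the space components. -/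
theorem reverse_cauchy_schwarz {A A' P R S : ℝ} (hA : 0 ≤ A) (hA' : 0 ≤ A') (hP : 0 ≤ P)
    (hR : 0 ≤ R) (hS : S ^ 2 ≤ P * R) (hPA : P ≤ A ^ 2) (hRA : R ≤ A' ^ 2) :
    S ≤ A * A' ∧ (A ^ 2 - P) * (A' ^ 2 - R) ≤ (A * A' - S) ^ 2 := by
  obtain ⟨q, hq, rfl⟩ : ∃ q, 0 ≤ q ∧ q ^ 2 = P := ⟨√P, Real.sqrt_nonneg P, Real.sq_sqrt hP⟩
  obtain ⟨r, hr, rfl⟩ : ∃ r, 0 ≤ r ∧ r ^ 2 = R := ⟨√R, Real.sqrt_nonneg R, Real.sq_sqrt hR⟩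
  have hSqr : S ≤ q * r := abs_le_of_sq_le_sq' (by rwa [mul_pow]) (by positivity) |>.2
  have hqr : q * r ≤ A * A' :=
    mul_le_mul (abs_le_of_sq_le_sq' hPA hA).2 (abs_le_of_sq_le_sq' hRA hA').2 hr hA
  refine ⟨hSqr.trans hqr, ?_⟩
  have hmono : (A * A' - q * r) ^ 2 ≤ (A * A' - S) ^ 2 :=
    pow_le_pow_left₀ (by linarith) (by linarith) 2
  nlinarith [sq_nonneg (A * r - A' * q)]

/-- Cauchy-Schwarz for the deviations of two vectors from their means. -/
theorem sq_covariance_le {n : ℕ} (hn : n ≠ 0) (x y : Fin n → ℝ) :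
    (∑ i, x i * y i - (∑ i, x i) * (∑ i, y i) / n) ^ 2 ≤
      (∑ i, x i ^ 2 - (∑ i, x i) ^ 2 / n) * (∑ i, y i ^ 2 - (∑ i, y i) ^ 2 / n) := by
  have hn' : (n : ℝ) ≠ 0 := Nat.cast_ne_zero.mpr hn
  have hcov (u v : Fin n → ℝ) :
      ∑ i, (u i - (∑ j, u j) / n) * (v i - (∑ j, v j) / n) =
        ∑ i, u i * v i - (∑ i, u i) * (∑ i, v i) / n := by
    simp only [sub_mul, mul_sub, Finset.sum_sub_distrib, ← Finset.sum_mul, ← Finset.mul_sum,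
      Finset.sum_const, Finset.card_univ, Fintype.card_fin, nsmul_eq_mul]
    field_simp
    ring
  have h := Finset.sum_mul_sq_le_sq_mul_sq Finset.univ
    (fun i => x i - (∑ j, x j) / n) (fun i => y i - (∑ j, y j) / n)
  simp only [pow_two (_ - _), hcov] at h
  simpa only [pow_two] using h

/-- The sum of squared deviations from the mean is nonnegative. -/
theorem variance_nonneg (n : ℕ) (x : Fin n → ℝ) :
    0 ≤ ∑ i, x i ^ 2 - (∑ i, x i) ^ 2 / n := by
  have h := sq_sum_le_card_mul_sum_sq (s := Finset.univ) (f := x)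
  rw [Finset.card_univ, Fintype.card_fin] at h
  exact sub_nonneg.mpr (div_le_of_le_mul₀ (Nat.cast_nonneg n)
    (Finset.sum_nonneg fun i _ => sq_nonneg (x i)) (by linarith))

/-- The symmetric bilinear form polarizing the homogenization of `a₀ + a₁ σ₁ + a₂ σ₂`. -/
noncomputable def polarForm (n : ℕ) (a₀ a₁ a₂ : ℝ) (x y : Fin n → ℝ) : ℝ :=
  a₀ + a₁ * (∑ i, x i + ∑ i, y i) / 2 + a₂ * ((∑ i, x i) * (∑ i, y i) - ∑ i, x i * y i) / 2

theorem esymm_combination_eq_polarForm_self (n : ℕ) (a₀ a₁ a₂ : ℝ) (x : Fin n → ℝ) :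
    a₀ + a₁ * esymm n 1 x + a₂ * esymm n 2 x = polarForm n a₀ a₁ a₂ x x := by
  simp only [esymm_one, esymm_two, polarForm, pow_two]
  ring

theorem polarForm_self_nonneg {n : ℕ} {a₀ a₁ a₂ : ℝ} (h₀ : 0 ≤ a₀) (h₁ : 0 ≤ a₁) (h₂ : 0 ≤ a₂)
    {x : Fin n → ℝ} (hx : ∀ i, 0 ≤ x i) : 0 ≤ polarForm n a₀ a₁ a₂ x x := by
  rw [← esymm_combination_eq_polarForm_self]
  have := esymm_nonneg 1 hx
  have := esymm_nonneg 2 hx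
  positivity

theorem polarForm_combination {n : ℕ} (a₀ a₁ a₂ : ℝ) (x y : Fin n → ℝ) {a b : ℝ}
    (hab : a + b = 1) :
    polarForm n a₀ a₁ a₂ (a • x + b • y) (a • x + b • y) =
      a ^ 2 * polarForm n a₀ a₁ a₂ x x + b ^ 2 * polarForm n a₀ a₁ a₂ y y
        + 2 * a * b * polarForm n a₀ a₁ a₂ x y := by
  have hsum : ∑ i, (a • x + b • y) i = a * ∑ i, x i + b * ∑ i, y i := by
    simp [Finset.sum_add_distrib, Finset.mul_sum]
  have hsq : ∑ i, (a • x + b • y) i * (a • x + b • y) i =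
      a ^ 2 * ∑ i, x i * x i + b ^ 2 * ∑ i, y i * y i + 2 * a * b * ∑ i, x i * y i := by
    simp only [Finset.mul_sum, ← Finset.sum_add_distrib, Pi.add_apply, Pi.smul_apply, smul_eq_mul]
    exact Finset.sum_congr rfl fun i _ => by ring
  obtain rfl : b = 1 - a := by linarith
  simp only [polarForm, hsum, hsq]
  ring

/-- Reverse Cauchy-Schwarz for `polarForm` on the nonnegative orthant. -/
theorem sqrt_mul_sqrt_le_polarForm {n : ℕ} (hn : 2 ≤ n) {a₀ a₁ a₂ : ℝ} (h₀ : 0 ≤ a₀)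
    (h₁ : 0 ≤ a₁) (h₂ : 0 ≤ a₂)
    (hD : 0 ≤ (n : ℝ) * a₁ ^ 2 - 2 * ((n : ℝ) - 1) * a₀ * a₂)
    {x y : Fin n → ℝ} (hx : ∀ i, 0 ≤ x i) (hy : ∀ i, 0 ≤ y i) :
    √(polarForm n a₀ a₁ a₂ x x) * √(polarForm n a₀ a₁ a₂ y y) ≤ polarForm n a₀ a₁ a₂ x y := by
  have hfx := polarForm_self_nonneg h₀ h₁ h₂ hx
  have hfy := polarForm_self_nonneg h₀ h₁ h₂ hy
  rw [← Real.sqrt_mul hfx]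
  refine Real.sqrt_le_iff.mpr ?_
  have hsx : 0 ≤ ∑ i, x i := Finset.sum_nonneg fun i _ => hx i
  have hsy : 0 ≤ ∑ i, y i := Finset.sum_nonneg fun i _ => hy i
  rcases h₂.eq_or_lt with rfl | h₂
  · simp only [polarForm]
    refine ⟨by rw [zero_mul, zero_div]; positivity, ?_⟩
    nlinarith [sq_nonneg (a₁ * (∑ i, x i - ∑ i, y i))]
  have hn' : (2 : ℝ) ≤ n := by exact_mod_cast hn
  have hn₀ : (n : ℝ) ≠ 0 := by linarith
  have hw := sq_covariance_le (by omega : n ≠ 0) x y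
  have hu := variance_nonneg n x
  have hv := variance_nonneg n y
  simp only [pow_two (x _), pow_two (y _)] at hw hu hv
  simp only [polarForm] at hfx hfy ⊢
  generalize ∑ i, x i = s at *
  generalize ∑ i, y i = t at *
  generalize ∑ i, x i * y i = m at *
  generalize ∑ i, x i * x i = p at *
  generalize ∑ i, y i * y i = q at *
  obtain ⟨c, hc⟩ : ∃ c, c = a₂ * (n - 1) / (2 * n) := ⟨_, rfl⟩
  have hcpos : 0 < c := by
    rw [hc]
    exact div_pos (mul_pos h₂ (by linarith)) (by linarith)
  have hD' : 0 ≤ a₁ ^ 2 - 4 * a₀ * c := by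
    have h : a₁ ^ 2 - 4 * a₀ * c = (n * a₁ ^ 2 - 2 * (n - 1) * a₀ * a₂) / n := by
      rw [hc]; field_simp; ring
    rw [h]
    positivity
  obtain ⟨u, hu'⟩ : ∃ u, u = p - s ^ 2 / n := ⟨_, rfl⟩
  obtain ⟨v, hv'⟩ : ∃ v, v = q - t ^ 2 / n := ⟨_, rfl⟩
  obtain ⟨w, hw'⟩ : ∃ w, w = m - s * t / n := ⟨_, rfl⟩
  rw [← hu'] at hu hw
  rw [← hv'] at hv hw
  rw [← hw'] at hw
  have hform (s t m w : ℝ) (hw' : w = m - s * t / n) :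
      4 * c * (a₀ + a₁ * (s + t) / 2 + a₂ * (s * t - m) / 2) =
        (2 * c * s + a₁) * (2 * c * t + a₁) - (a₁ ^ 2 - 4 * a₀ * c + 2 * c * a₂ * w) := by
    rw [hw', hc]; field_simp; ring
  have hX := hform s s p u (by rw [hu']; ring)
  have hY := hform t t q v (by rw [hv']; ring)
  have hB := hform s t m w hw'
  generalize a₀ + a₁ * (s + s) / 2 + a₂ * (s * s - p) / 2 = F at *
  generalize a₀ + a₁ * (t + t) / 2 + a₂ * (t * t - q) / 2 = G at *
  generalize a₀ + a₁ * (s + t) / 2 + a₂ * (s * t - m) / 2 = B at *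
  have huv : 2 * w ≤ u + v :=
    (abs_le_of_sq_le_sq' (by nlinarith [sq_nonneg (u - v)]) (by positivity)).2
  obtain ⟨hle, hsq⟩ := reverse_cauchy_schwarz
    (A := 2 * c * s + a₁) (A' := 2 * c * t + a₁)
    (P := a₁ ^ 2 - 4 * a₀ * c + 2 * c * a₂ * u) (R := a₁ ^ 2 - 4 * a₀ * c + 2 * c * a₂ * v)
    (S := a₁ ^ 2 - 4 * a₀ * c + 2 * c * a₂ * w)
    (by positivity) (by positivity) (by positivity) (by positivity)
    (by
      have hk : 0 ≤ 2 * c * a₂ := by positivity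
      have hcross := mul_nonneg (mul_nonneg hD' hk) (sub_nonneg.mpr huv)
      have hgram := mul_nonneg (sq_nonneg (2 * c * a₂)) (sub_nonneg.mpr hw)
      nlinarith)
    (by linarith [mul_nonneg (by positivity : 0 ≤ 4 * c) hfx])
    (by linarith [mul_nonneg (by positivity : 0 ≤ 4 * c) hfy])
  rw [pow_two (2 * c * s + a₁), pow_two (2 * c * t + a₁), ← hX, ← hY, ← hB] at hsq
  refine ⟨?_, ?_⟩
  · refine nonneg_of_mul_nonneg_right (a := 4 * c) ?_ (by positivity)
    linarith
  · refine le_of_mul_le_mul_left (a := (4 * c) ^ 2) ?_ (by positivity)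
    linarith

theorem concaveOn_sqrt_polarForm {n : ℕ} {a₀ a₁ a₂ : ℝ} (h₀ : 0 ≤ a₀) (h₁ : 0 ≤ a₁)
    (h₂ : 0 ≤ a₂) (hn : 2 ≤ n)
    (hD : 0 ≤ (n : ℝ) * a₁ ^ 2 - 2 * ((n : ℝ) - 1) * a₀ * a₂) :
    ConcaveOn ℝ {x : Fin n → ℝ | ∀ i, 0 < x i} (fun x => √(polarForm n a₀ a₁ a₂ x x)) := by
  refine ⟨?_, ?_⟩
  · have h : {x : Fin n → ℝ | ∀ i, 0 < x i} = Set.univ.pi fun _ => Set.Ioi 0 := by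
      ext; simp
    rw [h]
    exact convex_pi fun _ _ => convex_Ioi 0
  · intro x hx y hy a b ha hb hab
    have hx' : ∀ i, 0 ≤ x i := fun i => (hx i).le
    have hy' : ∀ i, 0 ≤ y i := fun i => (hy i).le
    have hB := sqrt_mul_sqrt_le_polarForm hn h₀ h₁ h₂ hD hx' hy'
    have hsx := Real.sq_sqrt (polarForm_self_nonneg h₀ h₁ h₂ hx')
    have hsy := Real.sq_sqrt (polarForm_self_nonneg h₀ h₁ h₂ hy')
    refine Real.le_sqrt_of_sq_le ?_
    rw [polarForm_combination a₀ a₁ a₂ x y hab, ← hsx, ← hsy]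
    simp only [smul_eq_mul]
    nlinarith [mul_le_mul_of_nonneg_left hB (mul_nonneg ha hb)]

/-- Midpoint concavity of the square root along the diagonal forces the discriminant condition. -/
theorem discriminant_nonneg_of_concaveOn {n : ℕ} {a₀ a₁ a₂ : ℝ} (h₀ : 0 ≤ a₀) (h₁ : 0 ≤ a₁)
    (h₂ : 0 ≤ a₂) (hn : 2 ≤ n)
    (hc : ConcaveOn ℝ {x : Fin n → ℝ | ∀ i, 0 < x i} (fun x => √(polarForm n a₀ a₁ a₂ x x))) :
    0 ≤ (n : ℝ) * a₁ ^ 2 - 2 * ((n : ℝ) - 1) * a₀ * a₂ := by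
  have hab : (1 / 2 : ℝ) + 1 / 2 = 1 := by norm_num
  have hone : (fun _ => 1) ∈ {x : Fin n → ℝ | ∀ i, 0 < x i} := fun _ => one_pos
  have htwo : (fun _ => 2) ∈ {x : Fin n → ℝ | ∀ i, 0 < x i} := fun _ => two_pos
  have hmid := hc.2 hone htwo one_half_pos.le one_half_pos.le hab
  simp only [polarForm_combination a₀ a₁ a₂ _ _ hab, smul_eq_mul] at hmid
  have hF := polarForm_self_nonneg h₀ h₁ h₂ (x := fun _ : Fin n => 1) fun _ => zero_le_one
  have hG := polarForm_self_nonneg h₀ h₁ h₂ (x := fun _ : Fin n => 2) fun _ => zero_le_two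
  have hprod : polarForm n a₀ a₁ a₂ (fun _ => 1) (fun _ => 1) *
      polarForm n a₀ a₁ a₂ (fun _ => 2) (fun _ => 2) ≤
        polarForm n a₀ a₁ a₂ (fun _ => 1) (fun _ => 2) ^ 2 := by
    have hFG := mul_nonneg (Real.sqrt_nonneg (polarForm n a₀ a₁ a₂ (fun _ => 1) fun _ => 1))
      (Real.sqrt_nonneg (polarForm n a₀ a₁ a₂ (fun _ => 2) fun _ => 2))
    have hB : 0 ≤ polarForm n a₀ a₁ a₂ (fun _ => 1) (fun _ => 2) := by
      simp only [polarForm, Finset.sum_const, Finset.card_univ, Fintype.card_fin, nsmul_eq_mul]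
      have hn' : (2 : ℝ) ≤ n := by exact_mod_cast hn
      have hnn : 0 ≤ (n : ℝ) * 1 * (n * 2) - n * (1 * 2) := by nlinarith
      positivity
    have hsq := (Real.le_sqrt (by positivity) (by positivity)).mp hmid
    have hle : √(polarForm n a₀ a₁ a₂ (fun _ => 1) fun _ => 1) *
        √(polarForm n a₀ a₁ a₂ (fun _ => 2) fun _ => 2) ≤
          polarForm n a₀ a₁ a₂ (fun _ => 1) (fun _ => 2) := by
      nlinarith [Real.sq_sqrt hF, Real.sq_sqrt hG]
    have h := pow_le_pow_left₀ hFG hle 2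
    rwa [mul_pow, Real.sq_sqrt hF, Real.sq_sqrt hG] at h
  simp only [polarForm, Finset.sum_const, Finset.card_univ, Fintype.card_fin, nsmul_eq_mul]
    at hprod
  have hn' : (2 : ℝ) ≤ n := by exact_mod_cast hn
  refine nonneg_of_mul_nonneg_right (a := (n : ℝ)) ?_ (by linarith)
  nlinarith

open Polynomial in
theorem splits_quadratic_iff {a b c : ℝ} (ha : a ≠ 0) :
    (C c + C b * X + C a * X ^ 2).Splits ↔ 0 ≤ discrim a b c := by
  have hp : C c + C b * X + C a * X ^ 2 = C a * X ^ 2 + C b * X + C c := by ring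
  have hdeg := degree_quadratic (b := b) (c := c) ha
  have heval (r : ℝ) : (C a * X ^ 2 + C b * X + C c).eval r = a * (r * r) + b * r + c := by
    simp [pow_two]
  rw [hp]
  constructor
  · intro h
    obtain ⟨r, hr⟩ := h.exists_eval_eq_zero (by rw [hdeg]; norm_num)
    rw [discrim_eq_sq_of_quadratic_eq_zero ((heval r).symm.trans hr)]
    exact sq_nonneg _
  · intro h
    obtain ⟨r, hr⟩ := exists_quadratic_eq_zero ha ⟨_, (Real.mul_self_sqrt h).symm⟩
    exact Splits.of_degree_eq_two hdeg ((heval r).trans hr)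

open Polynomial in
theorem splits_binomial_quadratic_iff {n : ℕ} (hn : 2 ≤ n) (a₀ a₁ a₂ : ℝ) :
    (C (a₀ * (n.choose 0 : ℝ)) + C (a₁ * (n.choose 1 : ℝ)) * X
        + C (a₂ * (n.choose 2 : ℝ)) * X ^ 2).Splits ↔
      0 ≤ (n : ℝ) * a₁ ^ 2 - 2 * ((n : ℝ) - 1) * a₀ * a₂ := by
  rcases eq_or_ne a₂ 0 with rfl | h₂
  · have hlin : (C (a₀ * (n.choose 0 : ℝ)) + C (a₁ * (n.choose 1 : ℝ)) * X
        + C (0 * (n.choose 2 : ℝ)) * X ^ 2).Splits := by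
      refine Splits.of_natDegree_le_one ?_
      rw [zero_mul, C_0, zero_mul, add_zero, add_comm]
      exact natDegree_linear_le
    refine iff_of_true hlin ?_
    rw [mul_zero, sub_zero]
    positivity
  · have hch : (n.choose 2 : ℝ) ≠ 0 := by exact_mod_cast (Nat.choose_pos hn).ne'
    rw [splits_quadratic_iff (mul_ne_zero h₂ hch)]
    have hn' : (0 : ℝ) < n := by exact_mod_cast (by omega : 0 < n)
    have h : discrim (a₂ * (n.choose 2 : ℝ)) (a₁ * (n.choose 1 : ℝ)) (a₀ * (n.choose 0 : ℝ)) =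
        n * (n * a₁ ^ 2 - 2 * (n - 1) * a₀ * a₂) := by
      rw [discrim, Nat.cast_choose_two, Nat.choose_one_right, Nat.choose_zero_right]
      push_cast
      ring
    rw [h, mul_nonneg_iff_of_pos_left hn']

open Polynomial in
theorem stmt8 (n : ℕ) (hn : 2 ≤ n) (a₀ a₁ a₂ : ℝ) (h₀ : 0 ≤ a₀) (h₁ : 0 ≤ a₁) (h₂ : 0 ≤ a₂) :
    (ConcaveOn ℝ {x : Fin n → ℝ | ∀ i, 0 < x i}
        (fun x => Real.sqrt (a₀ + a₁ * esymm n 1 x + a₂ * esymm n 2 x)) ↔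
      0 ≤ (n : ℝ) * a₁ ^ 2 - 2 * ((n : ℝ) - 1) * a₀ * a₂)
    ∧ (ConcaveOn ℝ {x : Fin n → ℝ | ∀ i, 0 < x i}
        (fun x => Real.sqrt (a₀ + a₁ * esymm n 1 x + a₂ * esymm n 2 x)) ↔
      (C (a₀ * (n.choose 0 : ℝ)) + C (a₁ * (n.choose 1 : ℝ)) * X
        + C (a₂ * (n.choose 2 : ℝ)) * X ^ 2).Splits) := by
  simp only [esymm_combination_eq_polarForm_self]
  rw [splits_binomial_quadratic_iff hn, and_self]
  exact ⟨discriminant_nonneg_of_concaveOn h₀ h₁ h₂ hn, concaveOn_sqrt_polarForm h₀ h₁ h₂ hn⟩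
end

section
/- Let n ≥ 1 and 0 ≤ k ≤ n. For every x ∈ ℝⁿ, the univariate polynomial X ↦ σ_k(x₁ + X, …, xₙ + X), of degree k, is real-rooted (all its complex roots are real). In other words, each elementary symmetric polynomial σ_k is hyperbolic in the direction 𝟙 = (1,…,1). -/
open Polynomial

/-- The univariate polynomial `σ_k(x₁ + X, …, xₙ + X)` obtained by substituting
`xᵢ + X` for the `i`-th variable in the `k`-th elementary symmetric polynomial. -/
noncomputable def esymmPoly (n k : ℕ) (x : Fin n → ℝ) : Polynomial ℝ :=
  ∑ s ∈ Finset.powersetCard k (Finset.univ : Finset (Fin n)), ∏ i ∈ s, (X + C (x i))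

/-- Over `ℝ`, the derivative of a polynomial that splits again splits. -/
theorem Polynomial.Splits.derivative_real {p : ℝ[X]} (hp : p.Splits) :
    (derivative p).Splits := by
  have h := card_roots_le_derivative p
  have h1 := splits_iff_card_roots.1 hp
  have h2 := natDegree_derivative_le p
  have h3 := card_roots' (derivative p)
  by_cases h0 : p.natDegree = 0
  · rw [eq_C_of_natDegree_eq_zero h0]
    simp
  · exact splits_iff_card_roots.2 (by omega)

/-- Over `ℝ`, the Hasse derivatives of a polynomial that splits again split. -/
theorem Polynomial.Splits.hasseDeriv_real {p : ℝ[X]} (hp : p.Splits) (m : ℕ) :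
    (hasseDeriv m p).Splits := by
  have hiter : (derivative^[m] p).Splits := by
    induction m with
    | zero => exact hp
    | succ m ih =>
      rw [Function.iterate_succ_apply']
      exact ih.derivative_real
  have hm : (m.factorial : ℝ) ≠ 0 := by exact_mod_cast m.factorial_ne_zero
  have h : C ((m.factorial : ℝ)⁻¹) * derivative^[m] p = hasseDeriv m p := by
    rw [← factorial_smul_hasseDeriv, LinearMap.smul_apply, nsmul_eq_mul, ← C_eq_natCast, ← mul_assoc,
      ← C_mul, inv_mul_cancel₀ hm, C_1, one_mul]
  rw [← h]
  exact (Splits.C _).mul hiter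

/-- `σ_k(x₁ + X, …, xₙ + X)` is the Hasse derivative of order `n - k` of `∏ᵢ (X + xᵢ)`. -/
theorem esymmPoly_eq_hasseDeriv {n k : ℕ} (hk : k ≤ n) (x : Fin n → ℝ) :
    esymmPoly n k x = hasseDeriv (n - k) (∏ i, (X + C (x i))) := by
  refine Polynomial.funext fun r => ?_
  have h : taylor r (∏ i, (X + C (x i))) = ∏ i, (X + C (r + x i)) := by
    simp [taylor_apply, prod_comp, add_assoc]
  rw [← taylor_coeff, h, Finset.prod_X_add_C_coeff _ _ (by simp)]
  simp [esymmPoly, eval_finsetSum, eval_prod, Nat.sub_sub_self hk]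

theorem stmt15 (n k : ℕ) (hn : 1 ≤ n) (hk : k ≤ n) (x : Fin n → ℝ) :
    (esymmPoly n k x).natDegree = k ∧ ((esymmPoly n k x).map (RingHom.id ℝ)).Splits := by
  rw [Polynomial.map_id, esymmPoly_eq_hasseDeriv hk]
  refine ⟨?_, (Splits.prod fun i _ => Splits.X_add_C (x i)).hasseDeriv_real _⟩
  rw [natDegree_hasseDeriv, natDegree_prod_of_monic _ _ fun i _ => monic_X_add_C (x i)]
  simp [Nat.sub_sub_self hk]
end
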